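/- arXiv:2406.12287 — 2 statements merged into one kernel-verified Lean document; each statement's English description precedes it below -/
import Mathlib

section
/- The Fitting ideals of a finitely generated module over a commutative ring are independent of the chosen finite presentation: if R^{b'} → R^b → M → 0 and R^{c'} → R^c → M → 0 are two presentations, then for each j the ideal generated by the (b-j)×(b-j) minors of the first presentation matrix equals the ideal generated by the (c-j)×(c-j) minors of the second. -/
/-- The `j`-th Fitting ideal of a presentation matrix `D` of size `b × b'`:
the ideal generated by all `(b-j)×(b-j)` minors of `D`. -/
def fittingIdeal {R : Type*} [CommRing R] {b b' : ℕ}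
    (D : Matrix (Fin b) (Fin b') R) (j : ℕ) : Ideal R :=
  Ideal.span (Set.range
    (fun p : (Fin (b - j) ↪ Fin b) × (Fin (b - j) ↪ Fin b') =>
      (D.submatrix (⇑p.1) (⇑p.2)).det))

/-!
Lift the two generating maps through one another to get matrices `P` and `Q` with `g₁ ∘ P = g₂`
and `g₂ ∘ Q = g₁`. The columns of `Q * D₁` and of `1 - Q * P` are relations of the second
presentation, say `Q * D₁ = D₂ * Z` and `1 - Q * P = D₂ * W`, whence
`[D₁, -P; 0, 1] = [1, 0; -Q, D₂] * [D₁, -P; Z, W]`.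
The minors of a product lie in the ideal of minors of the left factor, so minors of `D₁`, bordered
by the identity block, are combinations of minors of `[1, 0; -Q, D₂]`. Expanding these along their
columns in the first block leaves minors of `D₂`. The other inclusion follows by symmetry.
-/

open Matrix

section DeterminantalIdeal

variable {R m n p ι : Type*} [CommRing R]

/-- The `k`-th determinantal ideal of a matrix, generated by its `k × k` minors. It is the Fitting
ideal indexed by the size of the minors, for matrices with arbitrary index types. The rows and
columns of a minor are chosen by embeddings, so they may come in any order. -/
def determinantalIdeal (A : Matrix m n R) (k : ℕ) : Ideal R :=
  Ideal.span (Set.range fun s : (Fin k ↪ m) × (Fin k ↪ n) => (A.submatrix s.1 s.2).det)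

theorem determinantalIdeal_le_iff {A : Matrix m n R} {k : ℕ} {I : Ideal R} :
    determinantalIdeal A k ≤ I ↔
      ∀ (f : Fin k ↪ m) (g : Fin k ↪ n), (A.submatrix f g).det ∈ I := by
  rw [determinantalIdeal, Ideal.span_le, Set.range_subset_iff, Prod.forall]
  rfl

theorem det_submatrix_mem_determinantalIdeal [Fintype ι] [DecidableEq ι] (A : Matrix m n R)
    (f : ι → m) (g : ι → n) :
    (A.submatrix f g).det ∈ determinantalIdeal A (Fintype.card ι) := by
  by_cases hf : f.Injective
  · by_cases hg : g.Injective
    · let e := (Fintype.equivFin ι).symm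
      rw [← det_submatrix_equiv_self e]
      exact Ideal.subset_span
        ⟨(e.toEmbedding.trans ⟨f, hf⟩, e.toEmbedding.trans ⟨g, hg⟩), rfl⟩
    · obtain ⟨a, b, hab, hne⟩ := Function.not_injective_iff.mp hg
      rw [det_zero_of_column_eq hne fun i => by simp only [submatrix_apply, hab]]
      exact Ideal.zero_mem _
  · obtain ⟨a, b, hab, hne⟩ := Function.not_injective_iff.mp hf
    rw [det_zero_of_row_eq hne (by ext j; simp only [submatrix_apply, hab])]
    exact Ideal.zero_mem _

theorem determinantalIdeal_zero (A : Matrix m n R) : determinantalIdeal A 0 = ⊤ := by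
  rw [Ideal.eq_top_iff_one]
  simpa using det_submatrix_mem_determinantalIdeal A (Fin.elim0 : Fin 0 → m) Fin.elim0

theorem determinantalIdeal_transpose_le (A : Matrix m n R) (k : ℕ) :
    determinantalIdeal Aᵀ k ≤ determinantalIdeal A k := by
  refine determinantalIdeal_le_iff.mpr fun f g => ?_
  rw [← det_transpose]
  exact Ideal.subset_span ⟨(g, f), rfl⟩

theorem det_mul_eq_sum_prod_mul_det_submatrix [Fintype ι] [DecidableEq ι] [Fintype n]
    (A : Matrix ι n R) (B : Matrix n ι R) :
    (A * B).det = ∑ f : ι → n, (∏ i, A i (f i)) * (B.submatrix f id).det := by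
  classical
  have row_eq : A * B = fun i => ∑ k, A i k • B k := by
    ext i j
    simp only [mul_apply, Finset.sum_apply, Pi.smul_apply, smul_eq_mul]
  calc (A * B).det = detRowAlternating.toMultilinearMap fun i => ∑ k, A i k • B k := by
        rw [row_eq]; rfl
    _ = ∑ f : ι → n, detRowAlternating.toMultilinearMap fun i => A i (f i) • B (f i) :=
        MultilinearMap.map_sum _ _
    _ = ∑ f : ι → n, (∏ i, A i (f i)) * (B.submatrix f id).det :=
        Finset.sum_congr rfl fun f _ => MultilinearMap.map_smul_univ _ _ _

theorem determinantalIdeal_mul_le_right [Fintype n] (A : Matrix m n R) (B : Matrix n p R)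
    (k : ℕ) : determinantalIdeal (A * B) k ≤ determinantalIdeal B k := by
  refine determinantalIdeal_le_iff.mpr fun f g => ?_
  rw [submatrix_mul A B f id g Function.bijective_id, det_mul_eq_sum_prod_mul_det_submatrix]
  refine Ideal.sum_mem _ fun h _ => Ideal.mul_mem_left _ _ ?_
  simpa using det_submatrix_mem_determinantalIdeal B h g

theorem determinantalIdeal_mul_le_left [Fintype n] (A : Matrix m n R) (B : Matrix n p R)
    (k : ℕ) : determinantalIdeal (A * B) k ≤ determinantalIdeal A k :=
  calc determinantalIdeal (A * B) k = determinantalIdeal (Bᵀ * Aᵀ)ᵀ k := by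
        rw [transpose_mul, transpose_transpose, transpose_transpose]
    _ ≤ determinantalIdeal (Bᵀ * Aᵀ) k := determinantalIdeal_transpose_le _ k
    _ ≤ determinantalIdeal Aᵀ k := determinantalIdeal_mul_le_right _ _ k
    _ ≤ determinantalIdeal A k := determinantalIdeal_transpose_le A k

theorem determinantalIdeal_succ_le_of_eq_off_col {A B : Matrix m n R} (x : n)
    (hAB : ∀ i, ∀ j ≠ x, A i j = B i j) (k : ℕ) :
    determinantalIdeal A (k + 1) ≤ determinantalIdeal B k := by
  refine determinantalIdeal_le_iff.mpr fun f g => ?_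
  obtain ⟨a, ha⟩ : ∃ a, ∀ b ≠ a, g b ≠ x := by
    by_cases hx : x ∈ Set.range g
    · obtain ⟨a, rfl⟩ := hx
      exact ⟨a, fun b hb => g.injective.ne hb⟩
    · exact ⟨0, fun b _ hb => hx ⟨b, hb⟩⟩
  rw [det_succ_column _ a]
  refine Ideal.sum_mem _ fun i _ => Ideal.mul_mem_left _ _ ?_
  have minor_eq : (A.submatrix f g).submatrix i.succAbove a.succAbove =
      B.submatrix (f ∘ i.succAbove) (g ∘ a.succAbove) := by
    ext r s
    exact hAB _ _ (ha _ (a.succAbove_ne s))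
  rw [minor_eq]
  simpa using det_submatrix_mem_determinantalIdeal B (f ∘ i.succAbove) (g ∘ a.succAbove)

theorem determinantalIdeal_antitone (A : Matrix m n R) : Antitone (determinantalIdeal A) :=
  antitone_nat_of_succ_le fun k => determinantalIdeal_le_iff.mpr fun f g =>
    determinantalIdeal_succ_le_of_eq_off_col (g 0) (fun _ _ _ => rfl) k
      (Ideal.subset_span ⟨(f, g), rfl⟩)

theorem determinantalIdeal_add_card_le_of_eq_off_cols (s : Finset n)
    {A B : Matrix m n R} (hAB : ∀ i, ∀ j ∉ s, A i j = B i j) (k : ℕ) :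
    determinantalIdeal A (k + s.card) ≤ determinantalIdeal B k := by
  classical
  induction s using Finset.induction_on generalizing A with
  | empty =>
    obtain rfl : A = B := by
      ext i j
      exact hAB i j (Finset.notMem_empty j)
    rfl
  | insert x s hx ih =>
    let C := A.updateCol x (B.col x)
    have hAC : ∀ i, ∀ j ≠ x, A i j = C i j := fun i j hj => (updateCol_ne hj).symm
    have hCB : ∀ i, ∀ j ∉ s, C i j = B i j := by
      intro i j hj
      obtain rfl | hjx := eq_or_ne j x
      · exact updateCol_self
      · rw [← hAC i j hjx, hAB i j (by simp [hj, hjx])]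
    rw [Finset.card_insert_of_notMem hx, ← add_assoc]
    exact (determinantalIdeal_succ_le_of_eq_off_col x hAC _).trans (ih hCB)

theorem determinantalIdeal_fromCols_le [Fintype n] [Finite p] (A : Matrix m n R)
    (B : Matrix m p R) (k : ℕ) :
    determinantalIdeal (fromCols A B) (k + Fintype.card n) ≤ determinantalIdeal B k := by
  classical
  have := Fintype.ofFinite p
  have eq_off_left : ∀ i, ∀ j ∉ Finset.univ.map Function.Embedding.inl,
      fromCols A B i j = fromCols (0 : Matrix m n R) B i j := by
    rintro i (j | j) hj
    · simp at hj
    · rfl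
  calc determinantalIdeal (fromCols A B) (k + Fintype.card n)
      ≤ determinantalIdeal (fromCols (0 : Matrix m n R) B) k := by
        simpa using determinantalIdeal_add_card_le_of_eq_off_cols _ eq_off_left k
    _ = determinantalIdeal (B * fromCols (0 : Matrix p n R) 1) k := by
        rw [mul_fromCols, Matrix.mul_zero, Matrix.mul_one]
    _ ≤ determinantalIdeal B k := determinantalIdeal_mul_le_left _ _ k

theorem determinantalIdeal_le_fromBlocks_one [Fintype p] [DecidableEq p] (A : Matrix m n R)
    (B : Matrix m p R) (k : ℕ) :
    determinantalIdeal A k ≤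
      determinantalIdeal (fromBlocks A B 0 (1 : Matrix p p R)) (k + Fintype.card p) := by
  refine determinantalIdeal_le_iff.mpr fun f g => ?_
  have minor_eq : (fromBlocks A B 0 (1 : Matrix p p R)).submatrix (Sum.map f id) (Sum.map g id) =
      fromBlocks (A.submatrix f g) (B.submatrix f id) 0 1 := by
    ext (i | i) (j | j) <;> rfl
  have bordered_mem := det_submatrix_mem_determinantalIdeal
    (fromBlocks A B 0 (1 : Matrix p p R)) (Sum.map f id) (Sum.map g id)
  rwa [minor_eq, det_fromBlocks_zero₂₁, det_one, mul_one, Fintype.card_sum,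
    Fintype.card_fin] at bordered_mem

theorem determinantalIdeal_le_of_mul_eq {m₁ n₁ m₂ n₂ : Type*} [Fintype m₁] [Fintype m₂]
    [Fintype n₂] [DecidableEq m₂]
    {D₁ : Matrix m₁ n₁ R} {D₂ : Matrix m₂ n₂ R} {P : Matrix m₁ m₂ R} {Q : Matrix m₂ m₁ R}
    {Z : Matrix n₂ n₁ R} {W : Matrix n₂ m₂ R} (hZ : D₂ * Z = Q * D₁) (hW : D₂ * W = 1 - Q * P)
    {k l : ℕ} (hkl : l + Fintype.card m₁ ≤ k + Fintype.card m₂) :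
    determinantalIdeal D₁ k ≤ determinantalIdeal D₂ l := by
  classical
  let Y := fromBlocks (1 : Matrix m₁ m₁ R) 0 (-Q) D₂
  have factorization : fromBlocks D₁ (-P) 0 1 = Y * fromBlocks D₁ (-P) Z W := by
    simp [Y, fromBlocks_multiply, hZ, hW]
  let E : Matrix (m₁ ⊕ m₂) m₂ R := fromRows 0 1
  have Y_eq_fromCols : Y = fromCols (fromRows 1 (-Q)) (E * D₂) := by
    rw [fromRows_mul, Matrix.zero_mul, Matrix.one_mul, fromCols_fromRows_eq_fromBlocks]
  calc determinantalIdeal D₁ k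
      ≤ determinantalIdeal (fromBlocks D₁ (-P) 0 1) (k + Fintype.card m₂) :=
        determinantalIdeal_le_fromBlocks_one D₁ (-P) k
    _ ≤ determinantalIdeal Y (k + Fintype.card m₂) := by
        rw [factorization]
        exact determinantalIdeal_mul_le_left _ _ _
    _ ≤ determinantalIdeal Y (l + Fintype.card m₁) := determinantalIdeal_antitone Y hkl
    _ ≤ determinantalIdeal (E * D₂) l := by
        rw [Y_eq_fromCols]
        exact determinantalIdeal_fromCols_le _ _ l
    _ ≤ determinantalIdeal D₂ l := determinantalIdeal_mul_le_right _ _ l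

end DeterminantalIdeal

section Presentation

variable {R M : Type*} [CommRing R] [AddCommGroup M] [Module R M]

theorem exists_matrix_comp_toLin'_eq {m n : Type*} [Fintype n] [DecidableEq n]
    {g : (m → R) →ₗ[R] M} (hg : Function.Surjective g) (h : (n → R) →ₗ[R] M) :
    ∃ P : Matrix m n R, g ∘ₗ toLin' P = h := by
  obtain ⟨P, hP⟩ := Module.projective_lifting_property g h hg
  exact ⟨LinearMap.toMatrix' P, by rwa [toLin'_toMatrix']⟩

theorem exists_mul_eq_of_range_toLin'_le {m n p : Type*} [Fintype n] [DecidableEq n] [Fintype p]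
    [DecidableEq p] {D : Matrix m n R} {B : Matrix m p R}
    (h : LinearMap.range (toLin' B) ≤ LinearMap.range (toLin' D)) :
    ∃ Z : Matrix n p R, D * Z = B := by
  choose z hz using fun j => h ⟨Pi.single j 1, rfl⟩
  refine ⟨(of z)ᵀ, ext_col fun j => ?_⟩
  calc (D * (of z)ᵀ).col j = toLin' D (z j) := rfl
    _ = toLin' B (Pi.single j 1) := hz j
    _ = B.col j := by rw [toLin'_apply, mulVec_single_one]

theorem fittingIdeal_le_of_range_le_ker_of_ker_le_range {b b' c c' : ℕ}
    {D₁ : Matrix (Fin b) (Fin b') R} {D₂ : Matrix (Fin c) (Fin c') R}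
    {g₁ : (Fin b → R) →ₗ[R] M} {g₂ : (Fin c → R) →ₗ[R] M}
    (hg₁ : Function.Surjective g₁) (hg₂ : Function.Surjective g₂)
    (hD₁ : LinearMap.range (toLin' D₁) ≤ LinearMap.ker g₁)
    (hD₂ : LinearMap.ker g₂ ≤ LinearMap.range (toLin' D₂)) (j : ℕ) :
    fittingIdeal D₁ j ≤ fittingIdeal D₂ j := by
  change determinantalIdeal D₁ (b - j) ≤ determinantalIdeal D₂ (c - j)
  obtain hcj | hjc := le_or_gt c j
  · rw [Nat.sub_eq_zero_of_le hcj, determinantalIdeal_zero]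
    exact le_top
  obtain ⟨P, hP⟩ := exists_matrix_comp_toLin'_eq hg₁ g₂
  obtain ⟨Q, hQ⟩ := exists_matrix_comp_toLin'_eq hg₂ g₁
  have relations_Q_mul : g₂ ∘ₗ toLin' (Q * D₁) = 0 := by
    rwa [toLin'_mul, ← LinearMap.comp_assoc, hQ, ← LinearMap.range_le_ker_iff]
  have relations_one_sub : g₂ ∘ₗ toLin' (1 - Q * P) = 0 := by
    rw [map_sub, toLin'_one, toLin'_mul, LinearMap.comp_sub, ← LinearMap.comp_assoc, hQ, hP,
      LinearMap.comp_id, sub_self]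
  obtain ⟨Z, hZ⟩ := exists_mul_eq_of_range_toLin'_le
    ((LinearMap.range_le_ker_iff.mpr relations_Q_mul).trans hD₂)
  obtain ⟨W, hW⟩ := exists_mul_eq_of_range_toLin'_le
    ((LinearMap.range_le_ker_iff.mpr relations_one_sub).trans hD₂)
  refine determinantalIdeal_le_of_mul_eq hZ hW ?_
  simp only [Fintype.card_fin]
  lia

end Presentation

/-- the Fitting ideals of a finitely generated module over a
commutative ring are independent of the chosen finite presentation:
if `R^{b'} --D₁--> R^b --g₁--> M → 0` and `R^{c'} --D₂--> R^c --g₂--> M → 0`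
are two presentations, then for each `j` the ideal of `(b-j)×(b-j)` minors of
`D₁` equals the ideal of `(c-j)×(c-j)` minors of `D₂`. -/
theorem fittingIdeal_independent {R : Type*} [CommRing R]
    {M : Type*} [AddCommGroup M] [Module R M]
    (b b' c c' : ℕ)
    (D₁ : Matrix (Fin b) (Fin b') R) (D₂ : Matrix (Fin c) (Fin c') R)
    (g₁ : (Fin b → R) →ₗ[R] M) (g₂ : (Fin c → R) →ₗ[R] M)
    (hg₁ : Function.Surjective g₁) (hg₂ : Function.Surjective g₂)
    (hex₁ : LinearMap.ker g₁ = LinearMap.range (Matrix.toLin' D₁))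
    (hex₂ : LinearMap.ker g₂ = LinearMap.range (Matrix.toLin' D₂)) :
    ∀ j : ℕ, fittingIdeal D₁ j = fittingIdeal D₂ j :=
  fun j => le_antisymm
    (fittingIdeal_le_of_range_le_ker_of_ker_le_range hg₁ hg₂ hex₁.ge hex₂.le j)
    (fittingIdeal_le_of_range_le_ker_of_ker_le_range hg₂ hg₁ hex₂.ge hex₁.le j)
end

section
/- Let M be a finitely generated module over R = ℤ[t,t^{-1}] of rank r (i.e., dim over Frac(R) of M ⊗ Frac(R) equals r). Then Δ^j(M) = 0 for j < r, and Δ^j(M) = Δ^{j-r}(Tor(M)) for j ≥ r, where Tor(M) = {x ∈ M : fx = 0 for some nonzero f ∈ R}. -/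
open TensorProduct

/-- `Δ^j`: the gcd of all `(b-j)×(b-j)` minors of the `b × b'` presentation
matrix (over a UFD/GCD domain `R`, standing for `ℤ[t,t⁻¹]`). -/
noncomputable def deltaGCD {R : Type*} [CommRing R] [IsDomain R] [NormalizedGCDMonoid R]
    {b b' : ℕ} (A : Matrix (Fin b) (Fin b') R) (j : ℕ) : R :=
  Finset.univ.gcd
    (fun p : (Fin (b - j) ↪ Fin b) × (Fin (b - j) ↪ Fin b') =>
      (A.submatrix (⇑p.1) (⇑p.2)).det)

/-!
Let `d` be the gcd of the minors of `D` of size `ρ = rank D`, and let `d * s ≠ 0` be one of these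
minors, with rows `e`. As the minors of size `ρ + 1` vanish, Cramer's rule shows that `s • D`
factors through the rows `e` of `D`. The cokernel `N` of these rows is torsion, and the
factorization gives maps `N → Tor M` and `Tor M → N` both of whose composites are multiplication by
`s`. As for Fitting ideals, the ideals of minors of complementary size of `Tor M` and `N`, hence of
`Tor M` and `M`, therefore agree up to multiplication by powers of `s`. Since the elements `s` have
gcd one, the gcds of these ideals coincide.
-/

open Matrix

section Minors

variable {R l m n ι : Type*} [CommRing R]

/-- The determinantal ideal of `A`, generated by its `k × k` minors. Rows and columns are selected
by arbitrary functions: a repeated choice only contributes the generator `0`. -/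
def minorIdeal (A : Matrix m n R) (k : ℕ) : Ideal R :=
  Ideal.span (Set.range fun p : (Fin k → m) × (Fin k → n) => (A.submatrix p.1 p.2).det)

theorem det_submatrix_mem_minorIdeal [Fintype ι] [DecidableEq ι] (A : Matrix m n R) {k : ℕ}
    (hk : Fintype.card ι = k) (e : ι → m) (f : ι → n) :
    (A.submatrix e f).det ∈ minorIdeal A k := by
  let σ : Fin k ≃ ι := (Fintype.equivFinOfCardEq hk).symm
  rw [← det_submatrix_equiv_self σ, submatrix_submatrix]
  exact Ideal.subset_span ⟨(e ∘ σ, f ∘ σ), rfl⟩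

theorem minorIdeal_le_iff {A : Matrix m n R} {k : ℕ} {I : Ideal R} :
    minorIdeal A k ≤ I ↔ ∀ (e : Fin k ↪ m) (f : Fin k ↪ n), (A.submatrix e f).det ∈ I := by
  refine ⟨fun h e f => h (det_submatrix_mem_minorIdeal A (Fintype.card_fin k) e f), fun h => ?_⟩
  refine Ideal.span_le.2 ?_
  rintro _ ⟨⟨e, f⟩, rfl⟩
  change (A.submatrix e f).det ∈ I
  by_cases he : e.Injective
  · by_cases hf : f.Injective
    · exact h ⟨e, he⟩ ⟨f, hf⟩
    · obtain ⟨i, j, hij, hne⟩ := Function.not_injective_iff.1 hf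
      rw [det_zero_of_column_eq hne fun a => by simp only [submatrix_apply, hij]]
      exact I.zero_mem
  · obtain ⟨i, j, hij, hne⟩ := Function.not_injective_iff.1 he
    rw [det_zero_of_row_eq hne (by ext a; simp only [submatrix_apply, hij])]
    exact I.zero_mem

theorem minorIdeal_zero (A : Matrix m n R) : minorIdeal A 0 = ⊤ := by
  rw [Ideal.eq_top_iff_one]
  simpa using det_submatrix_mem_minorIdeal A (Fintype.card_fin 0) Fin.elim0 Fin.elim0

theorem minorIdeal_submatrix_le {l' : Type*} (A : Matrix m n R) (e : l → m) (f : l' → n) (k : ℕ) :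
    minorIdeal (A.submatrix e f) k ≤ minorIdeal A k :=
  minorIdeal_le_iff.2 fun _ _ => det_submatrix_mem_minorIdeal A (Fintype.card_fin k) _ _

theorem minorIdeal_transpose_le (A : Matrix m n R) (k : ℕ) :
    minorIdeal Aᵀ k ≤ minorIdeal A k := by
  refine minorIdeal_le_iff.2 fun e f => ?_
  rw [← det_transpose, transpose_submatrix, transpose_transpose]
  exact det_submatrix_mem_minorIdeal A (Fintype.card_fin k) f e

theorem minorIdeal_transpose (A : Matrix m n R) (k : ℕ) : minorIdeal Aᵀ k = minorIdeal A k :=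
  (minorIdeal_transpose_le A k).antisymm (minorIdeal_transpose_le Aᵀ k)

theorem minorIdeal_mul_le_right [Fintype m] (X : Matrix l m R) (A : Matrix m n R) (k : ℕ) :
    minorIdeal (X * A) k ≤ minorIdeal A k := by
  classical
  refine minorIdeal_le_iff.2 fun e f => ?_
  have hrows : (X * A).submatrix e f = fun i => ∑ j, X (e i) j • fun c => A j (f c) := by
    ext i c
    simp [mul_apply]
  change detRowAlternating.toMultilinearMap ((X * A).submatrix e f) ∈ _
  rw [hrows, MultilinearMap.map_sum]
  refine Ideal.sum_mem _ fun h _ => ?_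
  rw [MultilinearMap.map_smul_univ]
  exact Ideal.mul_mem_left _ _ (det_submatrix_mem_minorIdeal A (Fintype.card_fin k) h f)

theorem minorIdeal_mul_le_left [Fintype n] (A : Matrix m n R) (X : Matrix n l R) (k : ℕ) :
    minorIdeal (A * X) k ≤ minorIdeal A k := by
  rw [← minorIdeal_transpose, transpose_mul, ← minorIdeal_transpose A]
  exact minorIdeal_mul_le_right _ _ _

theorem minorIdeal_antitone (A : Matrix m n R) : Antitone (minorIdeal A) := by
  refine antitone_nat_of_succ_le fun k => minorIdeal_le_iff.2 fun e f => ?_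
  rw [det_succ_row_zero]
  refine Ideal.sum_mem _ fun j _ => Ideal.mul_mem_left _ _ ?_
  rw [submatrix_submatrix]
  exact det_submatrix_mem_minorIdeal A (Fintype.card_fin k) _ _

theorem det_submatrix_fromRows_mem_minorIdeal_of_isLeft [Fintype ι] [DecidableEq ι]
    (A : Matrix m n R) (B : Matrix l n R) {e : ι → m ⊕ l} (he : ∀ i, (e i).isLeft) (f : ι → n) :
    ((fromRows A B).submatrix e f).det ∈ minorIdeal A (Fintype.card ι) := by
  choose e' he' using fun i => Sum.isLeft_iff.1 (he i)
  have hrows : (fromRows A B).submatrix e f = A.submatrix e' f := by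
    ext i j
    simp [he']
  rw [hrows]
  exact det_submatrix_mem_minorIdeal A rfl e' f

/- A row of `B` is removed by Laplace expansion along it; once only rows of `A` are left, the minor
is at least of size `k`. -/
theorem det_submatrix_fromRows_mem_minorIdeal (A : Matrix m n R) (B : Matrix l n R) {k c : ℕ}
    (e : Fin (k + c) → m ⊕ l) (f : Fin (k + c) → n)
    (hc : (Finset.univ.filter fun i => ¬(e i).isLeft).card ≤ c) :
    ((fromRows A B).submatrix e f).det ∈ minorIdeal A k := by
  induction c with
  | zero =>
    have he : ∀ i, (e i).isLeft := by simpa [Finset.filter_eq_empty_iff] using hc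
    simpa using det_submatrix_fromRows_mem_minorIdeal_of_isLeft A B he f
  | succ c ih =>
    by_cases he : ∀ i, (e i).isLeft
    · refine minorIdeal_antitone A ?_ (det_submatrix_fromRows_mem_minorIdeal_of_isLeft A B he f)
      simp
    · obtain ⟨i, hi⟩ := not_forall.1 he
      rw [det_succ_row (n := k + c) _ i]
      refine Ideal.sum_mem _ fun j _ => Ideal.mul_mem_left _ _ ?_
      rw [submatrix_submatrix]
      refine ih _ _ ?_
      have hcount := Fin.sum_univ_succAbove (fun a => if ¬(e a).isLeft then 1 else 0) i
      rw [Finset.card_filter] at hc ⊢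
      rw [if_pos hi] at hcount
      exact Nat.le_of_add_le_add_left ((hcount.symm.trans_le hc).trans_eq (Nat.add_comm c 1))

theorem minorIdeal_fromRows_le [Fintype l] (A : Matrix m n R) (B : Matrix l n R) (k : ℕ) :
    minorIdeal (fromRows A B) (k + Fintype.card l) ≤ minorIdeal A k := by
  classical
  refine minorIdeal_le_iff.2 fun e f => det_submatrix_fromRows_mem_minorIdeal A B e f ?_
  rw [← Finset.card_map e]
  refine (Finset.card_le_card fun x hx => ?_).trans
    (Finset.card_map (s := Finset.univ) Function.Embedding.inr).le
  obtain ⟨i, hi, rfl⟩ := Finset.mem_map.1 hx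
  obtain ⟨a, ha⟩ := Sum.isRight_iff.1 (by simpa using hi)
  exact Finset.mem_map.2 ⟨a, Finset.mem_univ _, ha.symm⟩

theorem mul_mem_of_mem_minorIdeal {A : Matrix m n R} {k : ℕ} {a : R} {I : Ideal R}
    (h : ∀ (e : Fin k ↪ m) (f : Fin k ↪ n), a * (A.submatrix e f).det ∈ I) {x : R}
    (hx : x ∈ minorIdeal A k) : a * x ∈ I :=
  minorIdeal_le_iff (I := Submodule.comap (LinearMap.mulLeft R a) I).2 h hx

theorem pow_mul_mem_minorIdeal_smul (A : Matrix m n R) (s : R) {k : ℕ} {x : R}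
    (hx : x ∈ minorIdeal A k) : s ^ k * x ∈ minorIdeal (s • A) k := by
  refine mul_mem_of_mem_minorIdeal (fun e f => ?_) hx
  have hdet := det_smul (A.submatrix e f) s
  rw [Fintype.card_fin] at hdet
  rw [← hdet]
  exact det_submatrix_mem_minorIdeal (s • A) (Fintype.card_fin k) e f

/- The block matrix `[s, 0; -P, D']` factors through `D` extended by `card l` further rows, and
its minors containing the block `s` are the minors of `D'` times `s ^ card m`. -/
theorem pow_card_mul_mem_minorIdeal_of_mul_add_mul_eq {n' : Type*} [Fintype m]
    [DecidableEq m] [Fintype l] [Fintype n] {s : R} {D : Matrix m n R} {D' : Matrix l n' R}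
    {Q : Matrix m l R} {P : Matrix l m R} {U : Matrix n n' R} {V : Matrix n m R}
    (hs : Q * P + D * V = s • 1) (hU : Q * D' = D * U) {k : ℕ} {x : R}
    (hx : x ∈ minorIdeal D' (Fintype.card l - k)) :
    s ^ Fintype.card m * x ∈ minorIdeal D (Fintype.card m - k) := by
  classical
  rcases lt_or_ge (Fintype.card m) k with hk | hk
  · simp [Nat.sub_eq_zero_of_le hk.le, minorIdeal_zero]
  let E : Matrix (m ⊕ l) (m ⊕ n') R := fromBlocks (s • 1) 0 (-P) D'
  have hE : E = (fromBlocks 1 (-Q) 0 1 : Matrix (m ⊕ l) (m ⊕ l) R) *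
      fromRows (D * fromCols V U) (fromCols (-P) D') := by
    rw [mul_fromCols, fromRows_fromCols_eq_fromBlocks, fromBlocks_multiply]
    simp [E, ← hs, hU, add_comm]
  have hED : minorIdeal E (Fintype.card m - k + Fintype.card l) ≤
      minorIdeal D (Fintype.card m - k) := by
    rw [hE]
    exact (minorIdeal_mul_le_right _ _ _).trans
      ((minorIdeal_fromRows_le _ _ _).trans (minorIdeal_mul_le_left _ _ _))
  refine mul_mem_of_mem_minorIdeal (fun e f => ?_) hx
  have hminor : (E.submatrix (Sum.map id e) (Sum.map id f)).det =
      s ^ Fintype.card m * (D'.submatrix e f).det := by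
    have hblocks : E.submatrix (Sum.map id e) (Sum.map id f) =
        fromBlocks (s • 1) 0 ((-P).submatrix e id) (D'.submatrix e f) := by
      ext (i | i) (j | j) <;> rfl
    rw [hblocks, det_fromBlocks_zero₁₂, det_smul, det_one, mul_one]
  rw [← hminor]
  refine hED (minorIdeal_antitone E ?_ (det_submatrix_mem_minorIdeal E rfl _ _))
  rw [Fintype.card_sum, Fintype.card_fin]
  omega

end Minors

section Presentations

variable {R l m n M N : Type*} [CommRing R] [AddCommGroup M] [Module R M] [AddCommGroup N]
  [Module R N]

/-- `D` is a presentation matrix of `M`: the sequence `Rⁿ → Rᵐ → M → 0` with maps `D` and `g` is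
exact. -/
structure IsPresentationMatrix [Fintype n] (D : Matrix m n R) (g : (m → R) →ₗ[R] M) : Prop where
  surjective : Function.Surjective g
  ker_eq_range : LinearMap.ker g = LinearMap.range D.mulVecLin

theorem exists_matrix_comp_mulVecLin_eq [Fintype l]
    {g : (m → R) →ₗ[R] M} (hg : Function.Surjective g) (h : (l → R) →ₗ[R] M) :
    ∃ Q : Matrix m l R, g ∘ₗ Q.mulVecLin = h := by
  classical
  obtain ⟨φ, hφ⟩ := Module.projective_lifting_property g h hg
  exact ⟨LinearMap.toMatrix' φ, by rw [← toLin'_apply', toLin'_toMatrix', hφ]⟩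

theorem isPresentationMatrix_mkQ [Fintype n] (D : Matrix m n R) :
    IsPresentationMatrix D (LinearMap.range D.mulVecLin).mkQ :=
  ⟨Submodule.mkQ_surjective _, Submodule.ker_mkQ _⟩

namespace IsPresentationMatrix

theorem comp_mulVecLin [Fintype n] {D : Matrix m n R} {g : (m → R) →ₗ[R] M}
    (h : IsPresentationMatrix D g) : g ∘ₗ D.mulVecLin = 0 :=
  LinearMap.range_le_ker_iff.1 h.ker_eq_range.ge

theorem exists_eq_mul [Fintype n] [Fintype l] {D : Matrix m n R} {g : (m → R) →ₗ[R] M}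
    (h : IsPresentationMatrix D g) {Y : Matrix m l R} (hY : g ∘ₗ Y.mulVecLin = 0) :
    ∃ U : Matrix n l R, Y = D * U := by
  classical
  have hrange : ∀ z, Y.mulVecLin z ∈ LinearMap.range D.mulVecLin := fun z =>
    h.ker_eq_range.le (LinearMap.congr_fun hY z)
  obtain ⟨U, hU⟩ := exists_matrix_comp_mulVecLin_eq D.mulVecLin.surjective_rangeRestrict
    (Y.mulVecLin.codRestrict _ hrange)
  refine ⟨U, toLin'.injective ?_⟩
  rw [toLin'_apply', toLin'_apply', mulVecLin_mul]
  exact (congrArg (Submodule.subtype _ ∘ₗ ·) hU).symm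

theorem exists_comp_eq [Fintype n] {D : Matrix m n R} {g : (m → R) →ₗ[R] M}
    (h : IsPresentationMatrix D g) {φ : (m → R) →ₗ[R] N} (hφ : φ ∘ₗ D.mulVecLin = 0) :
    ∃ ψ : M →ₗ[R] N, ψ ∘ₗ g = φ := by
  have hker : LinearMap.ker g ≤ LinearMap.ker φ :=
    h.ker_eq_range.trans_le (LinearMap.range_le_ker_iff.2 hφ)
  refine ⟨(LinearMap.ker g).liftQ φ hker ∘ₗ (g.quotKerEquivOfSurjective h.surjective).symm, ?_⟩
  refine LinearMap.ext fun x => ?_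
  have hx : (g.quotKerEquivOfSurjective h.surjective).symm (g x) = (LinearMap.ker g).mkQ x :=
    (LinearEquiv.symm_apply_eq _).2 rfl
  simp only [LinearMap.comp_apply, LinearEquiv.coe_coe, hx, Submodule.mkQ_apply,
    Submodule.liftQ_apply]

/- For `s = 1` this says that the determinantal ideals of complementary size (the Fitting ideals)
can only grow when passing to a retract, in particular that they only depend on the module. -/
theorem pow_card_mul_mem_minorIdeal {m' n' : Type*} [Fintype m] [Fintype n] [Fintype m']
    [Fintype n'] {D : Matrix m n R} {g : (m → R) →ₗ[R] M} {D' : Matrix m' n' R}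
    {g' : (m' → R) →ₗ[R] N} (h : IsPresentationMatrix D g) (h' : IsPresentationMatrix D' g')
    {α : M →ₗ[R] N} {β : N →ₗ[R] M} {s : R} (hβα : β ∘ₗ α = s • LinearMap.id) {k : ℕ} {x : R}
    (hx : x ∈ minorIdeal D' (Fintype.card m' - k)) :
    s ^ Fintype.card m * x ∈ minorIdeal D (Fintype.card m - k) := by
  classical
  obtain ⟨P, hP⟩ := exists_matrix_comp_mulVecLin_eq h'.surjective (α ∘ₗ g)
  obtain ⟨Q, hQ⟩ := exists_matrix_comp_mulVecLin_eq h.surjective (β ∘ₗ g')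
  obtain ⟨U, hU⟩ := h.exists_eq_mul (Y := Q * D') (by
    rw [mulVecLin_mul, ← LinearMap.comp_assoc, hQ, LinearMap.comp_assoc, h'.comp_mulVecLin,
      LinearMap.comp_zero])
  obtain ⟨V, hV⟩ := h.exists_eq_mul (Y := s • 1 - Q * P) (by
    refine LinearMap.ext fun z => ?_
    have hQP : g (Q *ᵥ (P *ᵥ z)) = s • g z := calc
      g (Q *ᵥ (P *ᵥ z)) = β (g' (P *ᵥ z)) := LinearMap.congr_fun hQ _
      _ = β (α (g z)) := congrArg β (LinearMap.congr_fun hP z)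
      _ = s • g z := LinearMap.congr_fun hβα _
    change g ((s • 1 - Q * P) *ᵥ z) = 0
    rw [sub_mulVec, smul_mulVec, one_mulVec, ← mulVec_mulVec, map_sub, map_smul, hQP, sub_self])
  exact pow_card_mul_mem_minorIdeal_of_mul_add_mul_eq (by rw [← hV]; abel) hU hx

theorem isTorsion [Fintype m] [DecidableEq m] [Fintype n] {D : Matrix m n R}
    {g : (m → R) →ₗ[R] M} (h : IsPresentationMatrix D g) {f : m → n}
    (hdet : (D.submatrix id f).det ∈ nonZeroDivisors R) : Module.IsTorsion R M := by
  classical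
  refine fun x => ⟨⟨_, hdet⟩, ?_⟩
  obtain ⟨z, rfl⟩ := h.surjective x
  have hcols : D * (1 : Matrix n n R).submatrix id f = D.submatrix id f := by
    ext i j
    simp [mul_apply, one_apply]
  have hz : (D.submatrix id f).det • z =
      D *ᵥ ((1 : Matrix n n R).submatrix id f *ᵥ ((D.submatrix id f).adjugate *ᵥ z)) := by
    rw [mulVec_mulVec, mulVec_mulVec, hcols, mul_adjugate, smul_mulVec, one_mulVec]
  change (D.submatrix id f).det • g z = 0
  rw [← map_smul, hz]
  exact LinearMap.congr_fun h.comp_mulVecLin _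

/- `C` induces a map `γ : N → M` and the selection of the rows `e` a map `π : M → N`. Then
`π ∘ γ = s` holds on `N`, while `γ ∘ π = s` holds on the torsion of `M` only: it holds on the image
of `D`, which contains a multiple of every vector representing a torsion element. -/
theorem exists_torsion_comp_eq_smul_id [Fintype n] [Fintype l] [DecidableEq l] {D : Matrix m n R}
    {g : (m → R) →ₗ[R] M} (h : IsPresentationMatrix D g) {e : l → m} {g₁ : (l → R) →ₗ[R] N}
    (h₁ : IsPresentationMatrix (D.submatrix e id) g₁) (hN : Module.IsTorsion R N) {s : R}
    {C : Matrix m l R} (hCs : C.submatrix e id = s • 1) (hCD : C * D.submatrix e id = s • D) :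
    ∃ (α : N →ₗ[R] Submodule.torsion R M) (β : Submodule.torsion R M →ₗ[R] N),
      β ∘ₗ α = s • LinearMap.id ∧ α ∘ₗ β = s • LinearMap.id := by
  have hsub : (D.submatrix e id).mulVecLin = LinearMap.funLeft R R e ∘ₗ D.mulVecLin := rfl
  have hgD : ∀ y, g (D *ᵥ y) = 0 := LinearMap.congr_fun h.comp_mulVecLin
  obtain ⟨γ, hγ⟩ := h₁.exists_comp_eq (φ := g ∘ₗ C.mulVecLin) (by
    refine LinearMap.ext fun z => ?_
    change g (C *ᵥ (D.submatrix e id *ᵥ z)) = 0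
    rw [mulVec_mulVec, hCD, smul_mulVec, map_smul, hgD, smul_zero])
  obtain ⟨π, hπ⟩ := h.exists_comp_eq (φ := g₁ ∘ₗ LinearMap.funLeft R R e) (by
    rw [LinearMap.comp_assoc, ← hsub, h₁.comp_mulVecLin])
  have hγ' : ∀ z, γ (g₁ z) = g (C *ᵥ z) := LinearMap.congr_fun hγ
  have hπ' : ∀ x, π (g x) = g₁ (x ∘ e) := LinearMap.congr_fun hπ
  have hγ_torsion : ∀ y, γ y ∈ Submodule.torsion R M := fun y => by
    obtain ⟨a, ha⟩ := hN (x := y)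
    exact ⟨a, (map_smul γ (a : R) y).symm.trans ((congrArg γ ha).trans (map_zero γ))⟩
  have hπγ : ∀ y, π (γ y) = s • y := fun y => by
    obtain ⟨z, rfl⟩ := h₁.surjective y
    have hrows : (C *ᵥ z) ∘ e = s • z := by
      rw [← one_mulVec z, ← smul_mulVec, ← hCs, one_mulVec]
      rfl
    rw [hγ', hπ', hrows, map_smul]
  have hγπ : ∀ x ∈ Submodule.torsion R M, γ (π x) = s • x := fun x hx => by
    obtain ⟨x, rfl⟩ := h.surjective x
    obtain ⟨a, ha⟩ := hx
    obtain ⟨y, hy⟩ : ∃ y, D *ᵥ y = (a : R) • x :=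
      h.ker_eq_range.le (LinearMap.mem_ker.2 ((map_smul g (a : R) x).trans ha))
    have hCx : (a : R) • (C *ᵥ (x ∘ e)) = (a : R) • s • x := calc
      (a : R) • (C *ᵥ (x ∘ e)) = C *ᵥ ((D *ᵥ y) ∘ e) := by
        rw [hy, ← mulVec_smul]
        rfl
      _ = s • (D *ᵥ y) := by
        rw [← smul_mulVec, ← hCD, ← mulVec_mulVec]
        rfl
      _ = (a : R) • s • x := by rw [hy, smul_comm]
    have hcancel : C *ᵥ (x ∘ e) = s • x :=
      funext fun i => (mul_cancel_left_mem_nonZeroDivisors a.2).1 (congrFun hCx i)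
    rw [hπ', hγ', hcancel, map_smul]
  refine ⟨γ.codRestrict _ hγ_torsion, π ∘ₗ (Submodule.torsion R M).subtype, ?_, ?_⟩
  · exact LinearMap.ext hπγ
  · exact LinearMap.ext fun x => Subtype.ext (hγπ x x.2)

theorem finrank_add_rank [IsDomain R] [Fintype m] [Fintype n] {D : Matrix m n R}
    {g : (m → R) →ₗ[R] M} (h : IsPresentationMatrix D g) :
    Module.finrank R M + D.rank = Fintype.card m := by
  rw [Matrix.rank, ← h.ker_eq_range, ← (g.quotKerEquivOfSurjective h.surjective).finrank_eq,
    Submodule.finrank_quotient_add_finrank, Module.finrank_fintype_fun_eq_card]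

end IsPresentationMatrix

end Presentations

section Rank

variable {R m n ι : Type*} [CommRing R]

theorem minorIdeal_eq_bot_of_rank_lt [IsDomain R] [Fintype n] {A : Matrix m n R} {k : ℕ}
    (h : A.rank < k) : minorIdeal A k = ⊥ := by
  refine le_bot_iff.1 (minorIdeal_le_iff.2 fun e f => ?_)
  by_contra hdet
  refine h.not_ge ?_
  calc k = (A.submatrix e f).rank := by rw [rank_of_det_ne_zero hdet, Fintype.card_fin]
    _ ≤ A.rank := rank_submatrix_le _ _ _

theorem det_fromBlocks_mul_det_pow {κ : Type*} [Fintype ι] [DecidableEq ι] [Fintype κ]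
    [DecidableEq κ] {A : Matrix ι ι R} (hA : A.det ∈ nonZeroDivisors R) (u : Matrix ι κ R)
    (v : Matrix κ ι R) (w : Matrix κ κ R) :
    (fromBlocks A u v w).det * A.det ^ Fintype.card κ =
      A.det * (A.det • w - v * A.adjugate * u).det := by
  have hmul : fromBlocks A u v w * fromBlocks A.adjugate (-(A.adjugate * u)) 0 (A.det • 1) =
      fromBlocks (A.det • 1) 0 (v * A.adjugate) (A.det • w - v * A.adjugate * u) := by
    rw [fromBlocks_multiply]
    simp [← Matrix.mul_assoc, mul_adjugate, sub_eq_neg_add]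
  have hdet : (fromBlocks A u v w).det * (A.adjugate.det * A.det ^ Fintype.card κ) =
      A.det ^ Fintype.card ι * (A.det • w - v * A.adjugate * u).det := by
    simpa only [det_mul, det_fromBlocks_zero₂₁, det_fromBlocks_zero₁₂, det_smul, det_one, mul_one]
      using congrArg det hmul
  have hadj : A.adjugate.det * A.det = A.det ^ Fintype.card ι := by
    rw [← det_mul, adjugate_mul, det_smul, det_one, mul_one]
  refine (mul_cancel_left_mem_nonZeroDivisors (pow_mem hA (Fintype.card ι))).1 ?_
  linear_combination A.det * hdet - (fromBlocks A u v w).det * A.det ^ Fintype.card κ * hadj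

/- The difference of the two sides at `(i, j)` is the minor of `D.submatrix e f` bordered by the row
`i` and the column `j`. -/
theorem mul_adjugate_mul_eq_det_smul [Fintype ι] [DecidableEq ι] {D : Matrix m n R}
    {e : ι → m} {f : ι → n} (hdet : (D.submatrix e f).det ∈ nonZeroDivisors R)
    (hD : minorIdeal D (Fintype.card ι + 1) = ⊥) :
    D.submatrix id f * (D.submatrix e f).adjugate * D.submatrix e id =
      (D.submatrix e f).det • D := by
  ext i j
  have hminor : (D.submatrix (Sum.elim e fun _ : Unit => i) (Sum.elim f fun _ : Unit => j)).det ∈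
      minorIdeal D (Fintype.card ι + 1) :=
    det_submatrix_mem_minorIdeal D (by simp) _ _
  rw [hD, Ideal.mem_bot] at hminor
  have hblocks : D.submatrix (Sum.elim e fun _ : Unit => i) (Sum.elim f fun _ : Unit => j) =
      fromBlocks (D.submatrix e f) (D.submatrix e fun _ => j) (D.submatrix (fun _ => i) f)
        (D.submatrix (fun _ => i) fun _ => j) := by
    ext (a | a) (c | c) <;> rfl
  have hbordered := det_fromBlocks_mul_det_pow hdet (D.submatrix e fun _ : Unit => j)
    (D.submatrix (fun _ => i) f) (D.submatrix (fun _ => i) fun _ => j)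
  rw [← hblocks, hminor, zero_mul, det_unique (n := Unit)] at hbordered
  exact (sub_eq_zero.1 ((mul_left_mem_nonZeroDivisors_eq_zero_iff hdet).1 hbordered.symm)).symm

theorem minorIdeal_eq_bot_iff_rank_lt [IsDomain R] [Fintype n] {A : Matrix m n R} {k : ℕ} :
    minorIdeal A k = ⊥ ↔ A.rank < k := by
  refine ⟨fun h => ?_, minorIdeal_eq_bot_of_rank_lt⟩
  induction k with
  | zero => exact absurd (h.symm.trans (minorIdeal_zero A)) bot_ne_top
  | succ k ih =>
    by_cases hk : minorIdeal A k = ⊥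
    · exact (ih hk).trans k.lt_succ_self
    · obtain ⟨e, f, hdet⟩ : ∃ (e : Fin k ↪ m) (f : Fin k ↪ n), (A.submatrix e f).det ≠ 0 := by
        contrapose! hk
        exact le_bot_iff.1 (minorIdeal_le_iff.2 hk)
      replace hdet := mem_nonZeroDivisors_of_ne_zero hdet
      have hA := mul_adjugate_mul_eq_det_smul hdet (by rwa [Fintype.card_fin])
      refine Nat.lt_succ_of_le ?_
      calc A.rank = ((A.submatrix e f).det • A).rank :=
            (rank_smul_of_mem_nonZeroDivisors _ hdet).symm
        _ = (A.submatrix id f * (A.submatrix e f).adjugate * A.submatrix e id).rank :=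
            congrArg rank hA.symm
        _ ≤ (A.submatrix e id).rank := rank_mul_le_right _ _
        _ ≤ k := by simpa using rank_le_card_height (A.submatrix e id)

theorem mul_adjugate_apply_mem_minorIdeal [Fintype ι] [DecidableEq ι] (D : Matrix m n R)
    (e : ι → m) (f : ι → n) (k : m) (i : ι) :
    (D.submatrix id f * (D.submatrix e f).adjugate) k i ∈ minorIdeal D (Fintype.card ι) := by
  have hrow : D.submatrix (Function.update e i k) f =
      (D.submatrix e f).updateRow i fun c => D k (f c) := by
    ext a c
    by_cases ha : a = i
    · subst ha
      simp
    · simp [ha]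
  have hminor : (D.submatrix id f * (D.submatrix e f).adjugate) k i =
      (D.submatrix (Function.update e i k) f).det := by
    rw [hrow, ← cramer_transpose_apply, cramer_eq_adjugate_mulVec, ← adjugate_transpose,
      mulVec_transpose]
    rfl
  rw [hminor]
  exact det_submatrix_mem_minorIdeal D rfl _ _

theorem exists_mul_submatrix_eq_smul [Fintype ι] [DecidableEq ι] {D : Matrix m n R}
    {e : ι → m} {f : ι → n} {d s : R} (hdet : (D.submatrix e f).det = d * s)
    (hreg : d * s ∈ nonZeroDivisors R) (hD : minorIdeal D (Fintype.card ι + 1) = ⊥)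
    (hd : ∀ x ∈ minorIdeal D (Fintype.card ι), d ∣ x) :
    ∃ C : Matrix m ι R, C.submatrix e id = s • 1 ∧ C * D.submatrix e id = s • D := by
  choose C hC using fun k i => hd _ (mul_adjugate_apply_mem_minorIdeal D e f k i)
  have hdC : d • of C = D.submatrix id f * (D.submatrix e f).adjugate :=
    Matrix.ext fun k i => (hC k i).symm
  have hsub : d • (of C).submatrix e id = d • s • (1 : Matrix ι ι R) := calc
    d • (of C).submatrix e id = (d • of C).submatrix e id := rfl
    _ = D.submatrix e f * (D.submatrix e f).adjugate := by rw [hdC]; rfl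
    _ = d • s • 1 := by rw [mul_adjugate, hdet, mul_smul]
  have hmul : d • (of C * D.submatrix e id) = d • s • D := calc
    d • (of C * D.submatrix e id) = (d • of C) * D.submatrix e id := (smul_mul _ _ _).symm
    _ = (D.submatrix e f).det • D := by
      rw [hdC, mul_adjugate_mul_eq_det_smul (hdet ▸ hreg) hD]
    _ = d • s • D := by rw [hdet, mul_smul]
  have hd_reg : d ∈ nonZeroDivisors R := (mul_mem_nonZeroDivisors.1 hreg).1
  exact ⟨of C,
    Matrix.ext fun i j => (mul_cancel_left_mem_nonZeroDivisors hd_reg).1 (congrFun₂ hsub i j),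
    Matrix.ext fun i j => (mul_cancel_left_mem_nonZeroDivisors hd_reg).1 (congrFun₂ hmul i j)⟩

theorem IsPresentationMatrix.pow_mul_mem_minorIdeal_torsion {mT nT M : Type*} [AddCommGroup M]
    [Module R M] [Fintype n] [Fintype mT] [Fintype nT] [Fintype ι] [DecidableEq ι]
    {D : Matrix m n R} {g : (m → R) →ₗ[R] M} (h : IsPresentationMatrix D g)
    {DT : Matrix mT nT R} {gT : (mT → R) →ₗ[R] Submodule.torsion R M}
    (hT : IsPresentationMatrix DT gT) {e : ι → m} {f : ι → n} {d s : R}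
    (hdet : (D.submatrix e f).det = d * s) (hreg : d * s ∈ nonZeroDivisors R)
    (hD : minorIdeal D (Fintype.card ι + 1) = ⊥)
    (hd : ∀ x ∈ minorIdeal D (Fintype.card ι), d ∣ x) (k : ℕ) :
    (∀ x ∈ minorIdeal D (Fintype.card ι - k),
      s ^ (Fintype.card mT + (Fintype.card ι - k)) * x ∈ minorIdeal DT (Fintype.card mT - k)) ∧
    ∀ x ∈ minorIdeal DT (Fintype.card mT - k),
      s ^ Fintype.card ι * x ∈ minorIdeal D (Fintype.card ι - k) := by
  obtain ⟨C, hCs, hCD⟩ := exists_mul_submatrix_eq_smul hdet hreg hD hd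
  have hN := isPresentationMatrix_mkQ (D.submatrix e id)
  obtain ⟨α, β, hβα, hαβ⟩ := h.exists_torsion_comp_eq_smul_id hN
    (hN.isTorsion (f := f) (hdet ▸ hreg)) hCs hCD
  refine ⟨fun x hx => ?_, fun x hx => ?_⟩
  · have hsx : s ^ (Fintype.card ι - k) * x ∈ minorIdeal (D.submatrix e id) (Fintype.card ι - k) :=
      minorIdeal_mul_le_right C _ _ (hCD ▸ pow_mul_mem_minorIdeal_smul D s hx)
    rw [pow_add, mul_assoc]
    exact hT.pow_card_mul_mem_minorIdeal hN hαβ hsx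
  · exact minorIdeal_submatrix_le D e id _ (hN.pow_card_mul_mem_minorIdeal hT hβα hx)

end Rank

section GCD

theorem exists_dvd_gcd_pow_mul {R ι : Type*} [CommMonoidWithZero R] [NormalizedGCDMonoid R]
    {S : Finset ι} {s : ι → R} {a x : R}
    (h : ∀ i ∈ S, s i ≠ 0 → ∃ N : ℕ, a ∣ s i ^ N * x) : ∃ N : ℕ, a ∣ S.gcd s ^ N * x := by
  classical
  induction S using Finset.induction_on with
  | empty => exact ⟨1, by simp⟩
  | insert i S _ ih =>
    obtain ⟨p, hp⟩ : ∃ N : ℕ, a ∣ s i ^ N * x := by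
      by_cases hi : s i = 0
      · exact ⟨1, by simp [hi]⟩
      · exact h i (Finset.mem_insert_self _ _) hi
    obtain ⟨q, hq⟩ := ih fun j hj => h j (Finset.mem_insert_of_mem hj)
    refine ⟨q * p, ?_⟩
    rw [Finset.gcd_insert]
    calc a ∣ gcd (s i ^ p) (S.gcd s ^ q) * x :=
          (dvd_gcd hp hq).trans (gcd_mul_right' x _ _).dvd
      _ ∣ gcd (s i) (S.gcd s ^ q) ^ p * x := mul_dvd_mul_right gcd_pow_left_dvd_pow_gcd _
      _ ∣ (gcd (s i) (S.gcd s) ^ q) ^ p * x :=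
          mul_dvd_mul_right (pow_dvd_pow_of_dvd gcd_pow_right_dvd_pow_gcd p) _
      _ = gcd (s i) (S.gcd s) ^ (q * p) * x := by rw [pow_mul]

variable {R : Type*} [CommRing R] [IsDomain R] [NormalizedGCDMonoid R]

theorem dvd_deltaGCD_iff {b b' : ℕ} {A : Matrix (Fin b) (Fin b') R} {j : ℕ} {c : R} :
    c ∣ deltaGCD A j ↔ ∀ x ∈ minorIdeal A (b - j), c ∣ x := by
  have hspan := minorIdeal_le_iff (A := A) (k := b - j) (I := Ideal.span {c})
  simp only [SetLike.le_def, Ideal.mem_span_singleton] at hspan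
  rw [deltaGCD, Finset.dvd_gcd_iff, hspan]
  exact ⟨fun h e f => h (e, f) (Finset.mem_univ _), fun h p _ => h p.1 p.2⟩

theorem deltaGCD_eq_zero_iff {b b' : ℕ} {A : Matrix (Fin b) (Fin b') R} {j : ℕ} :
    deltaGCD A j = 0 ↔ A.rank < b - j := by
  rw [← zero_dvd_iff, dvd_deltaGCD_iff, ← minorIdeal_eq_bot_iff_rank_lt, Submodule.eq_bot_iff]
  simp only [zero_dvd_iff]

theorem deltaGCD_dvd_deltaGCD_of_gcd_eq_one {ι : Type*} {S : Finset ι} {s : ι → R}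
    (hs : S.gcd s = 1) {a a' b b' : ℕ} {A : Matrix (Fin a) (Fin a') R}
    {B : Matrix (Fin b) (Fin b') R} {i j : ℕ}
    (h : ∀ p ∈ S, s p ≠ 0 → ∃ N : ℕ, ∀ x ∈ minorIdeal B (b - j), s p ^ N * x ∈
      minorIdeal A (a - i)) :
    deltaGCD A i ∣ deltaGCD B j := by
  refine dvd_deltaGCD_iff.2 fun x hx => ?_
  obtain ⟨N, hN⟩ : ∃ N : ℕ, deltaGCD A i ∣ S.gcd s ^ N * x :=
    exists_dvd_gcd_pow_mul fun p hp hne => (h p hp hne).imp fun N hN =>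
      dvd_deltaGCD_iff.1 dvd_rfl _ (hN x hx)
  rwa [hs, one_pow, one_mul] at hN

theorem IsPresentationMatrix.deltaGCD_finrank_add_eq_deltaGCD_torsion {M : Type*}
    [AddCommGroup M] [Module R M] {b b' bT bT' : ℕ} {D : Matrix (Fin b) (Fin b') R}
    {g : (Fin b → R) →ₗ[R] M} (h : IsPresentationMatrix D g) {DT : Matrix (Fin bT) (Fin bT') R}
    {gT : (Fin bT → R) →ₗ[R] Submodule.torsion R M} (hT : IsPresentationMatrix DT gT) (k : ℕ) :
    deltaGCD D (Module.finrank R M + k) = deltaGCD DT k := by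
  set r := Module.finrank R M
  have hrank : D.rank = b - r := by
    have hadd : r + D.rank = Fintype.card (Fin b) := h.finrank_add_rank
    rw [Fintype.card_fin] at hadd
    omega
  have hΔ : deltaGCD D r ≠ 0 := by simp [deltaGCD_eq_zero_iff, hrank]
  have hbot : minorIdeal D (Fintype.card (Fin (b - r)) + 1) = ⊥ := by
    rw [minorIdeal_eq_bot_iff_rank_lt, hrank, Fintype.card_fin]
    exact Nat.lt_succ_self _
  have hdvd : ∀ x ∈ minorIdeal D (Fintype.card (Fin (b - r))), deltaGCD D r ∣ x := by
    rw [Fintype.card_fin]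
    exact dvd_deltaGCD_iff.1 dvd_rfl
  have hnonempty : (Finset.univ :
      Finset ((Fin (b - r) ↪ Fin b) × (Fin (b - r) ↪ Fin b'))).Nonempty :=
    Finset.nonempty_of_ne_empty fun hempty => hΔ (by rw [deltaGCD, hempty, Finset.gcd_empty])
  obtain ⟨s, hs, hgcd⟩ := Finset.extract_gcd (fun p => (D.submatrix p.1 p.2).det) hnonempty
  have hlocal := fun p (hp : p ∈ Finset.univ) (hsp : s p ≠ 0) =>
    h.pow_mul_mem_minorIdeal_torsion hT (hs p hp)
      (mem_nonZeroDivisors_of_ne_zero (mul_ne_zero hΔ hsp)) hbot hdvd k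
  simp only [Fintype.card_fin, Nat.sub_sub] at hlocal
  refine dvd_antisymm_of_normalize_eq Finset.normalize_gcd Finset.normalize_gcd ?_ ?_
  · exact deltaGCD_dvd_deltaGCD_of_gcd_eq_one hgcd fun p hp hsp => ⟨_, (hlocal p hp hsp).2⟩
  · exact deltaGCD_dvd_deltaGCD_of_gcd_eq_one hgcd fun p hp hsp => ⟨_, (hlocal p hp hsp).1⟩

end GCD

/-- let `M` be a finitely generated module of rank `r` over the GCD
domain `R` (standing for `ℤ[t,t⁻¹]`), i.e. `dim_{Frac R} (M ⊗ Frac R) = r`,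
presented by `R^{b'} --D--> R^b → M → 0`, and let the torsion submodule
`Tor(M) = {x ∈ M : f • x = 0 for some f ≠ 0}` be presented by
`R^{bT'} --DT--> R^{bT} → Tor(M) → 0`.  Then `Δ^j(M) = 0` for `j < r` and
`Δ^j(M) = Δ^{j-r}(Tor M)` for `j ≥ r`. -/
theorem deltaGCD_rank_torsion {R : Type*} [CommRing R] [IsDomain R]
    [NormalizedGCDMonoid R] {M : Type*} [AddCommGroup M] [Module R M]
    (b b' : ℕ) (D : Matrix (Fin b) (Fin b') R)
    (g : (Fin b → R) →ₗ[R] M) (hg : Function.Surjective g)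
    (hexact : LinearMap.ker g = LinearMap.range (Matrix.toLin' D))
    (bT bT' : ℕ) (DT : Matrix (Fin bT) (Fin bT') R)
    (gT : (Fin bT → R) →ₗ[R] (Submodule.torsion R M))
    (hgT : Function.Surjective gT)
    (hexactT : LinearMap.ker gT = LinearMap.range (Matrix.toLin' DT))
    (r : ℕ) (hr : Module.rank (FractionRing R) (FractionRing R ⊗[R] M) = r) :
    (∀ j : ℕ, j < r → deltaGCD D j = 0) ∧
      (∀ j : ℕ, r ≤ j → deltaGCD D j = deltaGCD DT (j - r)) := by
  have h : IsPresentationMatrix D g := ⟨hg, hexact⟩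
  have hT : IsPresentationMatrix DT gT := ⟨hgT, hexactT⟩
  have hfinrank : Module.finrank R M = r :=
    (TensorProduct.isBaseChange R M (FractionRing R)).finrank_eq.symm.trans
      (Module.finrank_eq_of_rank_eq hr)
  have hrank : r + D.rank = b := by
    rw [← hfinrank, h.finrank_add_rank, Fintype.card_fin]
  refine ⟨fun j hj => deltaGCD_eq_zero_iff.2 (by omega), fun j hj => ?_⟩
  rw [← h.deltaGCD_finrank_add_eq_deltaGCD_torsion hT, hfinrank, Nat.add_sub_cancel' hj]
end
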